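/- Let k be an algebraically closed field, A an associative k-algebra, and let V, W be non-isomorphic simple left A-modules that are finite-dimensional over k, with annihilators 𝔪 = Ann_A(V) and 𝔫 = Ann_A(W) (two-sided maximal ideals of A). If 𝔫 ∩ 𝔪 = 𝔫·𝔪, then Ext¹_A(V,W) = 0. (Hence Ext¹_A(V,W) ≠ 0 implies the existence of a second layer link from 𝔫 to 𝔪.) -/

import Mathlib

open CategoryTheory Opposite

noncomputable section

/-- `Ext¹` of left modules over the `k`-algebra `A` (as a `k`-vector space). -/
def Ext1 (k : Type) [Field k] (A : Type) [Ring A] [Algebra k A]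
    (M N : Type) [AddCommGroup M] [Module A M] [AddCommGroup N] [Module A N] : ModuleCat k :=
  ((Ext k (ModuleCat A) 1).obj (op (ModuleCat.of A M))).obj (ModuleCat.of A N)

/-!
Write `I = Ann W` and `J = Ann V`. By Schur's lemma `Hom(V, W) = Hom(W, V) = 0`, so the projection
of `V × W` onto `W` commutes with all endomorphisms, and by Jacobson density it is the action of
some `f ∈ A`; then `f ∈ J` and `1 - f ∈ I`. Such an `f` is central modulo `I ∩ J = IJ`.

If `π : P → V` is linear, then `fP ⊆ ker π` and `IJP ⊆ I ker π`. Hence for `h : ker π → W` the map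
`x ↦ h (f x)` is `A`-linear on `P`, because `h` kills `I ker π`, and it extends `h`, because `f`
acts as the identity on `W`. Taking for `π` the augmentation of a projective resolution of `V`,
this says that `Ext¹(V, W) = 0`.
-/

section Comaximal

variable {A V W : Type*} [Ring A] [AddCommGroup V] [Module A V] [AddCommGroup W] [Module A W]

theorem subsingleton_linearMap_of_isEmpty_linearEquiv [IsSimpleModule A V] [IsSimpleModule A W]
    (h : IsEmpty (V ≃ₗ[A] W)) : Subsingleton (V →ₗ[A] W) :=
  subsingleton_of_forall_eq 0 fun f ↦
    f.bijective_or_eq_zero.resolve_left fun hf ↦ h.false (.ofBijective f hf)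

variable (A V W) in
/-- The projection of `V × W` onto its second factor, as an element of the bicommutant of
`V × W`, to which the density theorem applies. -/
def sndBicommutant [Subsingleton (V →ₗ[A] W)] [Subsingleton (W →ₗ[A] V)] :
    Module.End (Module.End A (V × W)) (V × W) where
  toFun x := (0, x.2)
  map_add' x y := by simp
  map_smul' g x := by
    have hVW : (g (x.1, 0)).2 = 0 := congr($(Subsingleton.elim
      (LinearMap.snd A V W ∘ₗ g ∘ₗ LinearMap.inl A V W) 0) x.1)
    have hWV : (g (0, x.2)).1 = 0 := congr($(Subsingleton.elim
      (LinearMap.fst A V W ∘ₗ g ∘ₗ LinearMap.inr A V W) 0) x.2)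
    have hg : g x = g (x.1, 0) + g (0, x.2) := by simp [← map_add]
    ext <;> simp [hg, hVW, hWV]

instance isSemisimpleModule_prod [IsSemisimpleModule A V] [IsSemisimpleModule A W] :
    IsSemisimpleModule A (V × W) := by
  have h := IsSemisimpleModule.sup (.range (LinearMap.inl A V W)) (.range (LinearMap.inr A V W))
  rw [LinearMap.sup_range_inl_inr] at h
  exact .congr Submodule.topEquiv.symm

theorem annihilator_sup_annihilator_eq_top [IsSemisimpleModule A V] [IsSemisimpleModule A W]
    [Module.Finite (Module.End A V) V] [Module.Finite (Module.End A W) W]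
    [Subsingleton (V →ₗ[A] W)] [Subsingleton (W →ₗ[A] V)] :
    Module.annihilator A W ⊔ Module.annihilator A V = ⊤ := by
  classical
  obtain ⟨s, hs⟩ := Module.Finite.fg_top (R := Module.End A V) (M := V)
  obtain ⟨t, ht⟩ := Module.Finite.fg_top (R := Module.End A W) (M := W)
  obtain ⟨f, hf⟩ := jacobson_density (sndBicommutant A V W)
    (s.image (·, 0) ∪ t.image (0, ·))
  have hfV : Module.toModuleEnd (Module.End A V) V f = 0 := LinearMap.ext_on hs fun v hv ↦ by
    simpa [sndBicommutant, eq_comm] using hf (v, 0) (by simpa using .inl hv)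
  have hfW : Module.toModuleEnd (Module.End A W) W f = 1 := LinearMap.ext_on ht fun w hw ↦ by
    simpa [sndBicommutant, eq_comm] using hf (0, w) (by simpa using .inr hw)
  have hfV_mem : f ∈ Module.annihilator A V := Module.mem_annihilator.mpr fun v ↦ congr($hfV v)
  have hfW_mem : 1 - f ∈ Module.annihilator A W := Module.mem_annihilator.mpr fun w ↦ by
    rw [sub_smul, one_smul, sub_eq_zero]
    exact congr($hfW w).symm
  rw [Ideal.eq_top_iff_one, ← sub_add_cancel 1 f]
  exact Submodule.add_mem_sup hfW_mem hfV_mem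

end Comaximal

section Extension

variable {A M N : Type*} [Ring A] [AddCommGroup M] [Module A M] [AddCommGroup N] [Module A N]

theorem mul_sub_mul_mem_inf_of_add_eq_one {I J : Ideal A} [I.IsTwoSided] [J.IsTwoSided] {e f : A}
    (he : e ∈ I) (hf : f ∈ J) (hef : e + f = 1) (a : A) : f * a - a * f ∈ I ⊓ J := by
  obtain rfl : f = 1 - e := eq_sub_of_add_eq' hef
  refine ⟨?_, sub_mem (J.mul_mem_right a hf) (J.mul_mem_left a hf)⟩
  have : (1 - e) * a - a * (1 - e) = a * e - e * a := by noncomm_ring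
  rw [this]
  exact sub_mem (I.mul_mem_left a he) (I.mul_mem_right a he)

theorem smul_le_map_subtype_ker {I : Ideal A} (hI : I ≤ Module.annihilator A N)
    {K : Submodule A M} (h : K →ₗ[A] N) : I • K ≤ (LinearMap.ker h).map K.subtype :=
  Submodule.smul_le.mpr fun a ha x hx ↦ ⟨a • ⟨x, hx⟩, by
    rw [SetLike.mem_coe, LinearMap.mem_ker, map_smul]
    exact Module.mem_annihilator.mp (hI ha) _, rfl⟩

theorem exists_linearMap_comp_subtype_eq {I J : Ideal A} [I.IsTwoSided] [J.IsTwoSided]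
    (hsup : I ⊔ J = ⊤) (hinf : I ⊓ J ≤ I * J) (hI : I ≤ Module.annihilator A N)
    {K : Submodule A M} (hJ : J • ⊤ ≤ K) (h : K →ₗ[A] N) :
    ∃ g : M →ₗ[A] N, g ∘ₗ K.subtype = h := by
  obtain ⟨e, he, f, hf, hef⟩ := Submodule.mem_sup.mp ((Ideal.eq_top_iff_one _).mp hsup)
  have hfK (x : M) : f • x ∈ K := hJ (Submodule.smul_mem_smul hf trivial)
  have h_eq_zero {c : A} (hc : c ∈ I ⊓ J) {x : M} {y : K} (hy : (y : M) = c • x) : h y = 0 := by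
    have hIJ : (I * J) • ⊤ ≤ I • K := by
      rw [Submodule.mul_smul]
      exact Submodule.smul_mono le_rfl hJ
    obtain ⟨z, hz, hzy⟩ := smul_le_map_subtype_ker hI h
      (hIJ (Submodule.smul_mem_smul (hinf hc) (Submodule.mem_top (x := x))))
    rwa [Subtype.ext (hy.trans hzy.symm)]
  let g : M →ₗ[A] N :=
    { toFun x := h ⟨f • x, hfK x⟩
      map_add' x y := by
        rw [← map_add]
        congr 1
        exact Subtype.ext (smul_add f x y)
      map_smul' a x := by
        rw [RingHom.id_apply, ← map_smul, ← sub_eq_zero, ← map_sub]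
        refine h_eq_zero (mul_sub_mul_mem_inf_of_add_eq_one he hf hef a) (x := x) ?_
        simp [sub_smul, mul_smul] }
  refine ⟨g, LinearMap.ext fun x ↦ ?_⟩
  have he_smul : e • h x = 0 := Module.mem_annihilator.mp (hI he) (h x)
  calc g x = f • h x := h.map_smul f x
    _ = e • h x + f • h x := by rw [he_smul, zero_add]
    _ = h x := by rw [← add_smul, hef, one_smul]

end Extension

section Ext

theorem isZero_ext_one_of_forall_exists_kernel_ι_comp_eq (k : Type*) [Ring k] {C : Type*}
    [Category* C] [Abelian C] [Linear k C] [EnoughProjectives C] {X Y : C}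
    (P : ProjectiveResolution X)
    (h : ∀ u : Limits.kernel (P.π.f 0) ⟶ Y, ∃ g, Limits.kernel.ι (P.π.f 0) ≫ g = u) :
    Limits.IsZero (((Ext k C 1).obj (op X)).obj Y) := by
  refine .of_iso ?_ (P.isoExt 1 Y)
  rw [← HomologicalComplex.exactAt_iff_isZero_homology,
    HomologicalComplex.exactAt_iff' _ 0 1 2 (by simp) (by simp), ShortComplex.moduleCat_exact_iff]
  intro (f : P.complex.X 1 ⟶ Y) (hf : P.complex.d 2 1 ≫ f = 0)
  let p : P.complex.X 1 ⟶ Limits.kernel (P.π.f 0) :=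
    Limits.kernel.lift _ (P.complex.d 1 0) P.complex_d_comp_π_f_zero
  have : Epi p := P.exact₀.epi_kernelLift
  have hp : p ≫ Limits.kernel.ι (P.π.f 0) = P.complex.d 1 0 := Limits.kernel.lift_ι ..
  have hdp : P.complex.d 2 1 ≫ p = 0 := by
    rw [← cancel_mono (Limits.kernel.ι (P.π.f 0)), Category.assoc, hp, Limits.zero_comp,
      P.complex.d_comp_d]
  let φ : ShortComplex.mk _ p hdp ⟶ ShortComplex.mk _ _ (P.complex.d_comp_d 2 1 0) :=
    { τ₁ := 𝟙 _
      τ₂ := 𝟙 _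
      τ₃ := Limits.kernel.ι (P.π.f 0) }
  have hexact : (ShortComplex.mk _ p hdp).Exact :=
    (ShortComplex.exact_iff_of_epi_of_isIso_of_mono φ).mpr (P.exact_succ 0)
  obtain ⟨g, hg⟩ := h (hexact.desc f hf)
  refine ⟨g, ?_⟩
  calc P.complex.d 1 0 ≫ g = p ≫ hexact.desc f hf := by rw [← hp, Category.assoc, hg]
    _ = f := hexact.g_desc f hf

universe u v

variable (k : Type*) [Field k] {A : Type u} [Ring A] [Small.{v} A] [Algebra k A]
  {V W : Type v} [AddCommGroup V] [Module A V] [AddCommGroup W] [Module A W]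

theorem subsingleton_ext_one_of_sup_eq_top {I J : Ideal A} [I.IsTwoSided] [J.IsTwoSided]
    (hI : I ≤ Module.annihilator A W) (hJ : J ≤ Module.annihilator A V)
    (hsup : I ⊔ J = ⊤) (hinf : I ⊓ J ≤ I * J) :
    Subsingleton (((Ext k (ModuleCat.{v} A) 1).obj (op (.of A V))).obj (.of A W)) := by
  let P := projectiveResolution (ModuleCat.of A V)
  refine ModuleCat.isZero_iff_subsingleton.mp
    (isZero_ext_one_of_forall_exists_kernel_ι_comp_eq k P fun u ↦ ?_)
  have hJP : J • ⊤ ≤ LinearMap.ker (P.π.f 0).hom := Submodule.smul_le.mpr fun a ha x _ ↦ by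
    rw [LinearMap.mem_ker, map_smul]
    exact Module.mem_annihilator.mp (hJ ha) ((P.π.f 0).hom x : V)
  let e := ModuleCat.kernelIsoKer (P.π.f 0)
  obtain ⟨g, hg⟩ := exists_linearMap_comp_subtype_eq hsup hinf hI hJP (e.inv ≫ u).hom
  refine ⟨ModuleCat.ofHom g, (cancel_epi e.inv).mp ?_⟩
  rw [← Category.assoc, ModuleCat.kernelIsoKer_inv_kernel_ι]
  exact ModuleCat.hom_ext hg

theorem ext_eq_zero_of_no_second_layer_link_general
    [IsSemisimpleModule A V] [IsSemisimpleModule A W]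
    [Module.Finite (Module.End A V) V] [Module.Finite (Module.End A W) W]
    [Subsingleton (V →ₗ[A] W)] [Subsingleton (W →ₗ[A] V)]
    (hprod : Module.annihilator A W ⊓ Module.annihilator A V ≤
      Module.annihilator A W * Module.annihilator A V) :
    Subsingleton (((Ext k (ModuleCat.{v} A) 1).obj (op (.of A V))).obj (.of A W)) :=
  subsingleton_ext_one_of_sup_eq_top k le_rfl le_rfl annihilator_sup_annihilator_eq_top hprod

end Ext

/-- for non-isomorphic finite-dimensional simple modules `V`, `W` with
annihilators `𝔪 = Ann_A(V)`, `𝔫 = Ann_A(W)`, if `𝔫 ∩ 𝔪 = 𝔫·𝔪` (no second layer link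
from `𝔫` to `𝔪`), then `Ext¹_A(V,W) = 0`. -/
theorem ext_eq_zero_of_no_second_layer_link
    (k : Type) [Field k] [IsAlgClosed k]
    (A : Type) [Ring A] [Algebra k A]
    (V W : Type) [AddCommGroup V] [Module A V] [AddCommGroup W] [Module A W]
    [Module k V] [IsScalarTower k A V] [FiniteDimensional k V]
    [Module k W] [IsScalarTower k A W] [FiniteDimensional k W]
    (hV : IsSimpleModule A V) (hW : IsSimpleModule A W)
    (hniso : IsEmpty (V ≃ₗ[A] W))
    (hprod : Module.annihilator A W ⊓ Module.annihilator A V =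
      Ideal.span {x : A | ∃ n ∈ Module.annihilator A W, ∃ m ∈ Module.annihilator A V,
        x = n * m}) :
    Subsingleton (Ext1 k A V W) := by
  have : Module.Finite (Module.End A V) V := .of_restrictScalars_finite k _ _
  have : Module.Finite (Module.End A W) W := .of_restrictScalars_finite k _ _
  have : Subsingleton (V →ₗ[A] W) := subsingleton_linearMap_of_isEmpty_linearEquiv hniso
  have : Subsingleton (W →ₗ[A] V) :=
    subsingleton_linearMap_of_isEmpty_linearEquiv ⟨fun e ↦ hniso.false e.symm⟩
  refine ext_eq_zero_of_no_second_layer_link_general k (hprod.le.trans (Ideal.span_le.mpr ?_))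
  rintro _ ⟨n, hn, m, hm, rfl⟩
  exact Ideal.mul_mem_mul hn hm

end
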